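/- arXiv:1211.4514 — 2 statements merged into one kernel-verified Lean document; each statement's English description precedes it below -/
import Mathlib

section
/- One has (2/3) ∫_{θ=0}^{π/2} (2 + cos θ)² / ( (1 + cos θ) √(1 + 2 cos θ) ) dθ = (2/3) · ( −1 + 2√3 E(π/4, 4/3) + 2√3 F(π/4, 4/3) ), where E(φ, μ) = ∫₀^{φ} √(1 − μ sin²θ) dθ and F(φ, μ) = ∫₀^{φ} dθ/√(1 − μ sin²θ) are the incomplete elliptic integrals of the second and first kinds. -/
/-!
By partial fractions in `cos θ`, the integrand is `(9/2) / √(1 + 2 cos θ)` plus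
`(1/2) √(1 + 2 cos θ)` minus `√(1 + 2 cos θ) / (1 + cos θ)`. The half-angle identity
`a + b cos θ = (a + b) (1 - 2b/(a + b) sin² (θ/2))` turns the first two into elliptic integrals,
and differentiating `tan (θ/2) √(a + b cos θ)` reduces the third to them.
-/

open Real

/-- Incomplete elliptic integral of the second kind E(φ, μ) = ∫₀^φ √(1 − μ sin²θ) dθ. -/
noncomputable def ellipticE (φ μ : ℝ) : ℝ :=
  ∫ θ in (0 : ℝ)..φ, Real.sqrt (1 - μ * Real.sin θ ^ 2)

/-- Incomplete elliptic integral of the first kind F(φ, μ) = ∫₀^φ dθ/√(1 − μ sin²θ). -/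
noncomputable def ellipticF (φ μ : ℝ) : ℝ :=
  ∫ θ in (0 : ℝ)..φ, 1 / Real.sqrt (1 - μ * Real.sin θ ^ 2)

open intervalIntegral

section HalfAngle

variable {a b θ : ℝ}

lemma sqrt_add_mul_cos_eq_sqrt_add_mul_sqrt (hab : 0 < a + b) (θ : ℝ) :
    √(a + b * cos θ) = √(a + b) * √(1 - 2 * b / (a + b) * sin (θ / 2) ^ 2) := by
  rw [← sqrt_mul hab.le, sin_sq_eq_half_sub, mul_div_cancel₀ θ two_ne_zero]
  congr 1
  field_simp
  ring

lemma tan_half_mul_sin (hθ : cos θ ≠ -1) : tan (θ / 2) * sin θ = 1 - cos θ := by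
  rw [sin_eq_two_mul_tan_half_div_one_add_tan_half_sq,
    cos_eq_two_mul_tan_half_div_one_sub_tan_half_sq θ hθ]
  field_simp
  ring

lemma hasDerivAt_tan_half (hθ : cos θ ≠ -1) :
    HasDerivAt (fun t ↦ tan (t / 2)) (1 / (1 + cos θ)) θ := by
  have h_sq : cos (θ / 2) ^ 2 = (1 + cos θ) / 2 := by
    rw [cos_sq, mul_div_cancel₀ θ two_ne_zero]
    ring
  have h_cos : cos (θ / 2) ≠ 0 := fun h ↦ hθ (by linear_combination 2 * cos (θ / 2) * h - 2 * h_sq)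
  refine ((hasDerivAt_tan h_cos).comp θ ((hasDerivAt_id θ).div_const 2)).congr_deriv ?_
  rw [h_sq, one_div_div]
  ring

lemma hasDerivAt_tan_half_mul_sqrt_add_mul_cos (hθ : cos θ ≠ -1)
    (hpos : 0 < a + b * cos θ) :
    HasDerivAt (fun t ↦ tan (t / 2) * √(a + b * cos t))
      (√(a + b * cos θ) / (1 + cos θ)
        - ((a + b) / 2 * (1 / √(a + b * cos θ)) - 1 / 2 * √(a + b * cos θ))) θ := by
  have h_sqrt := (((hasDerivAt_cos θ).const_mul b).const_add a).sqrt hpos.ne'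
  refine ((hasDerivAt_tan_half hθ).mul h_sqrt).congr_deriv ?_
  have h_tail : tan (θ / 2) * (b * -sin θ / (2 * √(a + b * cos θ)))
      = -((a + b) / 2 * (1 / √(a + b * cos θ)) - 1 / 2 * √(a + b * cos θ)) := by
    have h_sq : √(a + b * cos θ) ^ 2 = a + b * cos θ := sq_sqrt hpos.le
    have h_ne : √(a + b * cos θ) ≠ 0 := (sqrt_pos.2 hpos).ne'
    field_simp
    linear_combination -b * tan_half_mul_sin hθ - h_sq
  rw [h_tail]
  ring

end HalfAngle

section EllipticIntegrals

variable {a b φ : ℝ}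

lemma integral_sqrt_add_mul_cos (hab : 0 < a + b) (φ : ℝ) :
    ∫ θ in 0..φ, √(a + b * cos θ) = 2 * √(a + b) * ellipticE (φ / 2) (2 * b / (a + b)) := by
  simp_rw [sqrt_add_mul_cos_eq_sqrt_add_mul_sqrt hab, integral_const_mul]
  rw [integral_comp_div (fun x ↦ √(1 - 2 * b / (a + b) * sin x ^ 2)) two_ne_zero, zero_div,
    smul_eq_mul, ellipticE]
  ring

lemma integral_one_div_sqrt_add_mul_cos (hab : 0 < a + b) (φ : ℝ) :
    ∫ θ in 0..φ, 1 / √(a + b * cos θ) =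
      2 / √(a + b) * ellipticF (φ / 2) (2 * b / (a + b)) := by
  simp_rw [sqrt_add_mul_cos_eq_sqrt_add_mul_sqrt hab, ← one_div_mul_one_div, integral_const_mul]
  rw [integral_comp_div (fun x ↦ 1 / √(1 - 2 * b / (a + b) * sin x ^ 2)) two_ne_zero, zero_div,
    smul_eq_mul, ellipticF]
  ring

lemma intervalIntegrable_sqrt_add_mul_cos (a b u v : ℝ) :
    IntervalIntegrable (fun θ ↦ √(a + b * cos θ)) MeasureTheory.volume u v :=
  Continuous.intervalIntegrable (by fun_prop) u v

lemma intervalIntegrable_one_div_sqrt_add_mul_cos {u v : ℝ}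
    (hpos : ∀ θ ∈ Set.uIcc u v, 0 < a + b * cos θ) :
    IntervalIntegrable (fun θ ↦ 1 / √(a + b * cos θ)) MeasureTheory.volume u v :=
  ContinuousOn.intervalIntegrable <|
    continuousOn_const.div (by fun_prop) fun θ hθ ↦ (sqrt_pos.2 (hpos θ hθ)).ne'

lemma abs_le_abs_of_mem_uIcc_zero {θ : ℝ} (hθ : θ ∈ Set.uIcc 0 φ) : |θ| ≤ |φ| := by
  simpa using Set.abs_sub_left_of_mem_uIcc hθ

lemma one_add_cos_pos_of_abs_lt_pi {θ : ℝ} (hθ : |θ| < π) : 0 < 1 + cos θ := by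
  have h_cos : cos π < cos |θ| := cos_lt_cos_of_nonneg_of_le_pi (abs_nonneg θ) le_rfl hθ
  rw [cos_pi, cos_abs] at h_cos
  linarith

lemma intervalIntegrable_sqrt_add_mul_cos_div_one_add_cos (a b : ℝ) (hφ : |φ| < π) :
    IntervalIntegrable (fun θ ↦ √(a + b * cos θ) / (1 + cos θ)) MeasureTheory.volume 0 φ :=
  ContinuousOn.intervalIntegrable <| ContinuousOn.div (by fun_prop) (by fun_prop) fun _ hθ ↦
    (one_add_cos_pos_of_abs_lt_pi <| (abs_le_abs_of_mem_uIcc_zero hθ).trans_lt hφ).ne'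

lemma integral_sqrt_add_mul_cos_div_one_add_cos (hφ : |φ| < π)
    (hpos : ∀ θ ∈ Set.uIcc 0 φ, 0 < a + b * cos θ) :
    ∫ θ in 0..φ, √(a + b * cos θ) / (1 + cos θ) =
      tan (φ / 2) * √(a + b * cos φ) + √(a + b) *
        (ellipticF (φ / 2) (2 * b / (a + b)) - ellipticE (φ / 2) (2 * b / (a + b))) := by
  have hab : 0 < a + b := by simpa using hpos 0 Set.left_mem_uIcc
  have h_inv := (intervalIntegrable_one_div_sqrt_add_mul_cos hpos).const_mul ((a + b) / 2)
  have h_sqrt := (intervalIntegrable_sqrt_add_mul_cos a b 0 φ).const_mul (1 / 2)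
  have h_quot := intervalIntegrable_sqrt_add_mul_cos_div_one_add_cos a b hφ
  have h_cos : ∀ θ ∈ Set.uIcc 0 φ, cos θ ≠ -1 := fun θ hθ ↦ by
    linarith [one_add_cos_pos_of_abs_lt_pi ((abs_le_abs_of_mem_uIcc_zero hθ).trans_lt hφ)]
  have h_ftc := integral_eq_sub_of_hasDerivAt
    (fun θ hθ ↦ hasDerivAt_tan_half_mul_sqrt_add_mul_cos (h_cos θ hθ) (hpos θ hθ))
    (h_quot.sub (h_inv.sub h_sqrt))
  rw [integral_sub h_quot (h_inv.sub h_sqrt), integral_sub h_inv h_sqrt, integral_const_mul,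
    integral_const_mul, integral_one_div_sqrt_add_mul_cos hab, integral_sqrt_add_mul_cos hab,
    zero_div, tan_zero, zero_mul, sub_zero] at h_ftc
  have h_div : (a + b) / √(a + b) = √(a + b) := div_sqrt
  linear_combination h_ftc + ellipticF (φ / 2) (2 * b / (a + b)) * h_div

end EllipticIntegrals

section Oloid

variable {θ φ : ℝ}

lemma one_add_two_mul_cos_pos_of_abs_lt (hθ : |θ| < 2 * π / 3) : 0 < 1 + 2 * cos θ := by
  have h_cos : cos (π - π / 3) < cos |θ| :=
    cos_lt_cos_of_nonneg_of_le_pi (abs_nonneg θ) (by linarith [pi_pos]) (by linarith)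
  rw [cos_pi_sub, cos_pi_div_three, cos_abs] at h_cos
  linarith

lemma oloid_integrand_eq_partial_fractions (hpos : 0 < 1 + 2 * cos θ) :
    (2 + cos θ) ^ 2 / ((1 + cos θ) * √(1 + 2 * cos θ)) =
      9 / 2 * (1 / √(1 + 2 * cos θ)) + 1 / 2 * √(1 + 2 * cos θ)
        - √(1 + 2 * cos θ) / (1 + cos θ) := by
  have h_sq : √(1 + 2 * cos θ) ^ 2 = 1 + 2 * cos θ := sq_sqrt hpos.le
  have h_sqrt : √(1 + 2 * cos θ) ≠ 0 := (sqrt_pos.2 hpos).ne'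
  have h_den : 1 + cos θ ≠ 0 := by linarith
  field_simp
  rw [h_sq]
  ring

theorem oloid_volume_integral_general (hφ : |φ| < 2 * π / 3) :
    ∫ θ in 0..φ, (2 + cos θ) ^ 2 / ((1 + cos θ) * √(1 + 2 * cos θ)) =
      -(tan (φ / 2) * √(1 + 2 * cos φ)) + 2 * √3 * ellipticE (φ / 2) (4 / 3)
        + 2 * √3 * ellipticF (φ / 2) (4 / 3) := by
  have h_pos : ∀ θ ∈ Set.uIcc 0 φ, 0 < 1 + 2 * cos θ := fun θ hθ ↦
    one_add_two_mul_cos_pos_of_abs_lt ((abs_le_abs_of_mem_uIcc_zero hθ).trans_lt hφ)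
  have hφπ : |φ| < π := by linarith [pi_pos]
  have h_inv := (intervalIntegrable_one_div_sqrt_add_mul_cos h_pos).const_mul (9 / 2)
  have h_sqrt := (intervalIntegrable_sqrt_add_mul_cos 1 2 0 φ).const_mul (1 / 2)
  rw [integral_congr fun θ hθ ↦ oloid_integrand_eq_partial_fractions (h_pos θ hθ),
    integral_sub (h_inv.add h_sqrt)
      (intervalIntegrable_sqrt_add_mul_cos_div_one_add_cos 1 2 hφπ),
    integral_add h_inv h_sqrt, integral_const_mul, integral_const_mul,
    integral_one_div_sqrt_add_mul_cos (by norm_num), integral_sqrt_add_mul_cos (by norm_num),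
    integral_sqrt_add_mul_cos_div_one_add_cos hφπ h_pos]
  norm_num only
  have h_div : 3 / √3 = √3 := div_sqrt
  linear_combination 3 * ellipticF (φ / 2) (4 / 3) * h_div

end Oloid

/-- the oloid volume integral has the stated elliptic closed form. -/
theorem oloid_volume_integral :
    (2 / 3) * (∫ θ in (0 : ℝ)..(Real.pi / 2),
        (2 + Real.cos θ) ^ 2 / ((1 + Real.cos θ) * Real.sqrt (1 + 2 * Real.cos θ))) =
      (2 / 3) * (-1 + 2 * Real.sqrt 3 * ellipticE (Real.pi / 4) (4/3)
        + 2 * Real.sqrt 3 * ellipticF (Real.pi / 4) (4/3)) := by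
  have hφ : |π / 2| < 2 * π / 3 := by
    rw [abs_of_pos pi_div_two_pos]
    linarith [pi_pos]
  rw [oloid_volume_integral_general hφ, div_div, cos_pi_div_two]
  norm_num
end

section
/- With ω = arcsin(√(√2 − 1)), one has (1/(2√2)) ∫_{θ=0}^{π/2} ( (2 + √2 cos θ)² (1 + √2 cos θ + cos²θ) ) / ( (1 + √2 cos θ)² √(1 + 2√2 cos θ + cos²θ) ) dθ = (√2 − 1)/2 + E(ω, −1) + √2 ( Π(−√2 − 1, ω, −1) + Π(√2 − 1, ω, −1) − F(ω, −1) ), where E(φ, μ) = ∫₀^{φ} √(1 − μ sin²θ) dθ, F(φ, μ) = ∫₀^{φ} dθ/√(1 − μ sin²θ), and Π(ν, φ, μ) = ∫₀^{φ} dθ / ( (1 − ν sin²θ) √(1 − μ sin²θ) ) are the incomplete elliptic integrals of the second, first, and third kinds. -/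
open Real

/-- Incomplete elliptic integral of the third kind
Π(ν, φ, μ) = ∫₀^φ dθ/((1 − ν sin²θ)√(1 − μ sin²θ)). -/
noncomputable def ellipticPi (ν φ μ : ℝ) : ℝ :=
  ∫ θ in (0 : ℝ)..φ,
    1 / ((1 - ν * Real.sin θ ^ 2) * Real.sqrt (1 - μ * Real.sin θ ^ 2))

/-!
Write `v = sin² φ`, `Δ = √(1 + v)` and `D = 1 + 2 v - v²`, which is the product of the factors
`1 - ν v` for the two characteristics `ν = ±√2 - 1`. The substitution `tan (θ / 2) = sin φ / √m`
turns `cos θ` into `(m - v) / (m + v)`, and `m = √2 - 1` is the value for which the radicand becomes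
a multiple of `1 - v² = cos² φ · Δ²`. The integrand times `1 / (2 √2)` is then
`2 (1 + v²)² / (D² Δ) + √2 (1 + v²) / (D Δ)`. By partial fractions the second term gives the
integrals of the first and third kinds, while the first one differs from `Δ` by the derivative of
`sin φ cos φ Δ (1 - v) / D`, a function that is `0` at `0` and `(√2 - 1) / 2` at `ω`.
-/

theorem one_sub_mul_sin_sq_pos {m : ℝ} (hm : m < 1) (φ : ℝ) : 0 < 1 - m * sin φ ^ 2 := by
  rcases le_total m 0 with hm0 | hm0
  · linarith [mul_nonpos_of_nonpos_of_nonneg hm0 (sq_nonneg (sin φ))]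
  · linarith [mul_le_of_le_one_right hm0 (sin_sq_le_one φ)]

theorem one_add_two_mul_sin_sq_sub_sin_pow_four_pos (φ : ℝ) :
    0 < 1 + 2 * sin φ ^ 2 - sin φ ^ 4 := by
  nlinarith [sin_sq_le_one φ, sq_nonneg (sin φ)]

theorem hasDerivAt_sin_sq (φ : ℝ) :
    HasDerivAt (fun x ↦ sin x ^ 2) (2 * sin φ * cos φ) φ :=
  ((hasDerivAt_sin φ).pow 2).congr_deriv (by simp)

theorem cos_two_mul_arctan (x : ℝ) : cos (2 * arctan x) = (1 - x ^ 2) / (1 + x ^ 2) := by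
  have hx : 1 + x ^ 2 ≠ 0 := by positivity
  rw [cos_two_mul, cos_sq_arctan]
  field_simp
  ring

theorem cos_two_mul_arctan_sin_div_sqrt {m : ℝ} (hm : 0 < m) (φ : ℝ) :
    cos (2 * arctan (sin φ / √m)) = (m - sin φ ^ 2) / (m + sin φ ^ 2) := by
  rw [cos_two_mul_arctan, div_pow, sq_sqrt hm.le]
  field_simp

theorem hasDerivAt_two_mul_arctan_sin_div_sqrt {m : ℝ} (hm : 0 < m) (φ : ℝ) :
    HasDerivAt (fun x ↦ 2 * arctan (sin x / √m)) (2 * √m * cos φ / (m + sin φ ^ 2)) φ := by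
  refine ((((hasDerivAt_sin φ).div_const (√m)).arctan).const_mul 2).congr_deriv ?_
  have hsqrt : √m ^ 2 = m := sq_sqrt hm.le
  rw [div_pow, hsqrt]
  field_simp
  rw [hsqrt, mul_comm]

theorem cos_pos_of_mem_Ioo_zero_arcsin {x φ : ℝ} (hφ : φ ∈ Set.Ioo 0 (arcsin x)) : 0 < cos φ :=
  cos_pos_of_mem_Ioo
    ⟨by linarith [hφ.1, pi_pos], hφ.2.trans_le (arcsin_le_pi_div_two x)⟩

theorem integral_comp_cos_eq_integral_arcsin_sqrt (g : ℝ → ℝ) {m : ℝ} (hm : 0 < m) (hm1 : m ≤ 1) :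
    ∫ θ in (0 : ℝ)..(π / 2), g (cos θ) =
      ∫ φ in (0 : ℝ)..arcsin (√m),
        g ((m - sin φ ^ 2) / (m + sin φ ^ 2)) * (2 * √m * cos φ / (m + sin φ ^ 2)) := by
  have hsqrt : 0 < √m := sqrt_pos.2 hm
  have hω : 0 ≤ arcsin (√m) := arcsin_nonneg.2 hsqrt.le
  have hderiv := hasDerivAt_two_mul_arctan_sin_div_sqrt hm
  have hsubst := intervalIntegral.integral_comp_mul_deriv_of_deriv_nonneg
    (g := fun θ ↦ g (cos θ)) (a := 0) (b := arcsin (√m))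
    (fun φ _ ↦ (hderiv φ).continuousAt.continuousWithinAt) (fun φ _ ↦ hderiv φ)
    (fun φ hφ ↦ by
      rw [min_eq_left hω, max_eq_right hω] at hφ
      have := cos_pos_of_mem_Ioo_zero_arcsin hφ
      positivity)
  have hend : 2 * arctan (sin (arcsin (√m)) / √m) = π / 2 := by
    rw [sin_arcsin (by linarith) (sqrt_le_one.2 hm1), div_self hsqrt.ne', arctan_one]
    ring
  simpa only [Function.comp_apply, cos_two_mul_arctan_sin_div_sqrt hm, hend, sin_zero, zero_div,
    arctan_zero, mul_zero] using hsubst.symm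

theorem one_div_mul_add_one_div_mul_sub_one_div {a b w : ℝ} (ha : a ≠ 0) (hb : b ≠ 0)
    (hw : w ≠ 0) : 1 / (a * w) + 1 / (b * w) - 1 / w = (a + b - a * b) / (a * b * w) := by
  field_simp
  ring

theorem ellipticPi_add_ellipticPi_sub_ellipticF {ν₁ ν₂ μ : ℝ} (hν₁ : ν₁ < 1) (hν₂ : ν₂ < 1)
    (hμ : μ < 1) (φ : ℝ) :
    ellipticPi ν₁ φ μ + ellipticPi ν₂ φ μ - ellipticF φ μ =
      ∫ θ in (0 : ℝ)..φ, (1 - ν₁ * ν₂ * sin θ ^ 4) /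
        ((1 - ν₁ * sin θ ^ 2) * (1 - ν₂ * sin θ ^ 2) * √(1 - μ * sin θ ^ 2)) := by
  have hΔ (θ : ℝ) : √(1 - μ * sin θ ^ 2) ≠ 0 := (sqrt_pos.2 (one_sub_mul_sin_sq_pos hμ θ)).ne'
  have hF : Continuous fun θ ↦ 1 / √(1 - μ * sin θ ^ 2) := by fun_prop (disch := exact hΔ)
  have hPi {ν : ℝ} (hν : ν < 1) :
      Continuous fun θ ↦ 1 / ((1 - ν * sin θ ^ 2) * √(1 - μ * sin θ ^ 2)) := by
    have hden (θ : ℝ) : (1 - ν * sin θ ^ 2) * √(1 - μ * sin θ ^ 2) ≠ 0 :=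
      mul_ne_zero (one_sub_mul_sin_sq_pos hν θ).ne' (hΔ θ)
    fun_prop (disch := exact hden)
  unfold ellipticPi ellipticF
  rw [← intervalIntegral.integral_add ((hPi hν₁).intervalIntegrable _ _)
      ((hPi hν₂).intervalIntegrable _ _),
    ← intervalIntegral.integral_sub (((hPi hν₁).fun_add (hPi hν₂)).intervalIntegrable _ _)
      (hF.intervalIntegrable _ _)]
  refine intervalIntegral.integral_congr fun θ _ ↦ ?_
  simp only [one_div_mul_add_one_div_mul_sub_one_div (one_sub_mul_sin_sq_pos hν₁ θ).ne'
    (one_sub_mul_sin_sq_pos hν₂ θ).ne' (hΔ θ)]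
  ring

theorem hasDerivAt_sin_mul_cos_mul_sqrt {μ φ : ℝ} (h : 0 < 1 - μ * sin φ ^ 2) :
    HasDerivAt (fun x ↦ sin x * cos x * √(1 - μ * sin x ^ 2))
      ((1 - 2 * (1 + μ) * sin φ ^ 2 + 3 * μ * sin φ ^ 4) / √(1 - μ * sin φ ^ 2)) φ := by
  have hsqrt := (((hasDerivAt_sin_sq φ).const_mul μ).const_sub 1).sqrt h.ne'
  refine (((hasDerivAt_sin φ).mul (hasDerivAt_cos φ)).mul hsqrt).congr_deriv ?_
  have hΔ : √(1 - μ * sin φ ^ 2) ≠ 0 := (sqrt_pos.2 h).ne'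
  have hsq : √(1 - μ * sin φ ^ 2) ^ 2 = 1 - μ * sin φ ^ 2 := sq_sqrt h.le
  simp only [Pi.mul_apply]
  generalize √(1 - μ * sin φ ^ 2) = Δ at hΔ hsq ⊢
  field_simp
  rw [hsq, cos_sq']
  ring

theorem hasDerivAt_one_sub_sin_sq_div (φ : ℝ) :
    HasDerivAt (fun x ↦ (1 - sin x ^ 2) / (1 + 2 * sin x ^ 2 - sin x ^ 4))
      (-(2 * sin φ * cos φ * (3 - 2 * sin φ ^ 2 + sin φ ^ 4)) /
        (1 + 2 * sin φ ^ 2 - sin φ ^ 4) ^ 2) φ := by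
  have hv := hasDerivAt_sin_sq φ
  have hv2 : HasDerivAt (fun x ↦ sin x ^ 4) (4 * sin φ ^ 3 * cos φ) φ :=
    ((hasDerivAt_sin φ).pow 4).congr_deriv (by simp)
  refine ((hv.const_sub 1).div (((hv.const_mul 2).const_add 1).sub hv2)
    (one_add_two_mul_sin_sq_sub_sin_pow_four_pos φ).ne').congr_deriv ?_
  simp only [Pi.sub_apply]
  ring

/-- The algebraic function of `sin φ` and `cos φ` whose derivative reduces an integral with the
squared denominator `(1 + 2 sin² φ - sin⁴ φ)²` to the integral of the second kind `E(φ, -1)`. -/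
noncomputable def algebraicPart (φ : ℝ) : ℝ :=
  sin φ * cos φ * √(1 + sin φ ^ 2) * ((1 - sin φ ^ 2) / (1 + 2 * sin φ ^ 2 - sin φ ^ 4))

theorem algebraicPart_zero : algebraicPart 0 = 0 := by simp [algebraicPart]

theorem hasDerivAt_algebraicPart (φ : ℝ) :
    HasDerivAt algebraicPart
      (2 * (1 + sin φ ^ 4) ^ 2 / ((1 + 2 * sin φ ^ 2 - sin φ ^ 4) ^ 2 * √(1 + sin φ ^ 2))
        - √(1 + sin φ ^ 2)) φ := by
  have hΔ := hasDerivAt_sin_mul_cos_mul_sqrt (one_sub_mul_sin_sq_pos (by norm_num : (-1 : ℝ) < 1) φ)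
  simp only [neg_one_mul, sub_neg_eq_add] at hΔ
  refine (hΔ.mul (hasDerivAt_one_sub_sin_sq_div φ)).congr_deriv ?_
  have hD := (one_add_two_mul_sin_sq_sub_sin_pow_four_pos φ).ne'
  have hsq : √(1 + sin φ ^ 2) ^ 2 = 1 + sin φ ^ 2 := sq_sqrt (by positivity)
  field_simp
  rw [hsq, cos_sq']
  ring

theorem continuous_one_add_sin_pow_four_sq_div :
    Continuous fun φ ↦
      2 * (1 + sin φ ^ 4) ^ 2 / ((1 + 2 * sin φ ^ 2 - sin φ ^ 4) ^ 2 * √(1 + sin φ ^ 2)) := by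
  have hden (φ : ℝ) : (1 + 2 * sin φ ^ 2 - sin φ ^ 4) ^ 2 * √(1 + sin φ ^ 2) ≠ 0 :=
    mul_ne_zero (pow_ne_zero 2 (one_add_two_mul_sin_sq_sub_sin_pow_four_pos φ).ne') (by positivity)
  fun_prop (disch := exact hden)

theorem integral_one_add_sin_pow_four_sq_div (φ : ℝ) :
    ∫ θ in (0 : ℝ)..φ,
        2 * (1 + sin θ ^ 4) ^ 2 / ((1 + 2 * sin θ ^ 2 - sin θ ^ 4) ^ 2 * √(1 + sin θ ^ 2)) =
      algebraicPart φ + ellipticE φ (-1) := by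
  have hf := continuous_one_add_sin_pow_four_sq_div
  have hE : Continuous fun θ ↦ √(1 + sin θ ^ 2) := by fun_prop
  have hFTC := intervalIntegral.integral_eq_sub_of_hasDerivAt (a := 0) (b := φ)
    (fun θ _ ↦ hasDerivAt_algebraicPart θ) ((hf.sub hE).intervalIntegrable _ _)
  rw [intervalIntegral.integral_sub (hf.intervalIntegrable _ _) (hE.intervalIntegrable _ _),
    algebraicPart_zero, sub_zero] at hFTC
  simpa only [ellipticE, neg_one_mul, sub_neg_eq_add] using sub_eq_iff_eq_add.1 hFTC

theorem sqrt_two_sub_one_pos : 0 < √2 - 1 := sub_pos.2 one_lt_sqrt_two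

theorem sqrt_two_sub_one_lt_one : √2 - 1 < 1 := by linarith [sqrt_two_lt_three_halves]

theorem one_sub_mul_mul_one_sub_mul_eq (v : ℝ) :
    (1 - (-√2 - 1) * v) * (1 - (√2 - 1) * v) = 1 + 2 * v - v ^ 2 := by
  linear_combination -v ^ 2 * sq_sqrt (zero_le_two (α := ℝ))

theorem continuous_one_add_sin_pow_four_div :
    Continuous fun φ ↦
      (1 + sin φ ^ 4) / ((1 + 2 * sin φ ^ 2 - sin φ ^ 4) * √(1 + sin φ ^ 2)) := by
  have hden (φ : ℝ) : (1 + 2 * sin φ ^ 2 - sin φ ^ 4) * √(1 + sin φ ^ 2) ≠ 0 :=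
    mul_ne_zero (one_add_two_mul_sin_sq_sub_sin_pow_four_pos φ).ne' (by positivity)
  fun_prop (disch := exact hden)

theorem integral_one_add_sin_pow_four_div (φ : ℝ) :
    ∫ θ in (0 : ℝ)..φ, (1 + sin θ ^ 4) / ((1 + 2 * sin θ ^ 2 - sin θ ^ 4) * √(1 + sin θ ^ 2)) =
      ellipticPi (-√2 - 1) φ (-1) + ellipticPi (√2 - 1) φ (-1) - ellipticF φ (-1) := by
  rw [ellipticPi_add_ellipticPi_sub_ellipticF (by linarith [sqrt_nonneg 2])
    sqrt_two_sub_one_lt_one (by norm_num)]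
  refine intervalIntegral.integral_congr fun θ _ ↦ ?_
  have hprod : (-√2 - 1) * (√2 - 1) = -1 := by
    linear_combination -sq_sqrt (zero_le_two (α := ℝ))
  simp only [one_sub_mul_mul_one_sub_mul_eq, hprod, neg_one_mul, sub_neg_eq_add, ← pow_mul]

theorem algebraicPart_arcsin_sqrt_two_sub_one :
    algebraicPart (arcsin (√(√2 - 1))) = (√2 - 1) / 2 := by
  have hsqrt2 : √2 ^ 2 = 2 := sq_sqrt zero_le_two
  have hc := sqrt_two_sub_one_pos
  have hsq : √(√2 - 1) ^ 2 = √2 - 1 := sq_sqrt hc.le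
  have hle : √(√2 - 1) ≤ 1 := sqrt_le_one.2 sqrt_two_sub_one_lt_one.le
  have hpow : √(√2 - 1) ^ 4 = (√2 - 1) ^ 2 := by
    rw [show 4 = 2 * 2 from rfl, pow_mul, hsq]
  have hroot : √(√2 - 1) * √(1 - (√2 - 1)) * √(1 + (√2 - 1)) = √2 * (√2 - 1) := by
    rw [← sqrt_mul hc.le, ← sqrt_mul (mul_nonneg hc.le (by linarith [sqrt_two_sub_one_lt_one])),
      ← sqrt_sq (mul_nonneg (sqrt_nonneg 2) hc.le)]
    congr 1
    linear_combination (√2 - √2 ^ 2) * hsqrt2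
  have hD : 1 + 2 * (√2 - 1) - (√2 - 1) ^ 2 = 4 * (√2 - 1) := by linear_combination -hsqrt2
  rw [algebraicPart, cos_arcsin, sin_arcsin (by linarith [sqrt_nonneg (√2 - 1)]) hle, hpow, hsq,
    hroot, hD]
  field_simp
  linear_combination -2 * hsqrt2

/-- The integrand of the two-circle-roller constant `γ` as a function of `x = cos θ`, without the
factor `1 / (2 √2)`. -/
noncomputable def rollerIntegrand (x : ℝ) : ℝ :=
  ((2 + √2 * x) ^ 2 * (1 + √2 * x + x ^ 2)) / ((1 + √2 * x) ^ 2 * √(1 + 2 * √2 * x + x ^ 2))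

theorem rollerIntegrand_div {v : ℝ} (hv : 0 ≤ v) (hv1 : v ≤ 1) :
    rollerIntegrand ((√2 - 1 - v) / (√2 - 1 + v)) =
      2 * √2 * (1 + v ^ 2) * (√2 * (1 + v ^ 2) + (1 + 2 * v - v ^ 2)) * (√2 - 1 + v) /
        ((1 + 2 * v - v ^ 2) ^ 2 * √(2 * (√2 - 1) * (1 - v ^ 2))) := by
  have hsqrt2 : √2 ^ 2 = 2 := sq_sqrt zero_le_two
  have hc := sqrt_two_sub_one_pos
  have hc1 := sqrt_two_sub_one_lt_one
  set c := √2 - 1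
  have hx : 0 < c + v := by linarith
  have hy : 0 < 1 - c * v := by nlinarith
  have htwo : 2 + √2 * ((c - v) / (c + v)) = √2 * (1 + c * v) / (c + v) := by
    field_simp
    linear_combination (1 - v) * hsqrt2
  have hquad : 1 + √2 * ((c - v) / (c + v)) + ((c - v) / (c + v)) ^ 2 =
      √2 * c * (1 + v ^ 2) / (c + v) ^ 2 := by
    field_simp
    linear_combination (c - v ^ 2) * hsqrt2
  have hone : 1 + √2 * ((c - v) / (c + v)) = (1 - c * v) / (c + v) := by
    field_simp
    linear_combination hsqrt2
  have hrad : 1 + 2 * √2 * ((c - v) / (c + v)) + ((c - v) / (c + v)) ^ 2 =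
      2 * c * (1 - v ^ 2) / (c + v) ^ 2 := by
    field_simp
    linear_combination 2 * c * hsqrt2
  have hnum : √2 * (1 + v ^ 2) + (1 + 2 * v - v ^ 2) = (1 + c * v) ^ 2 / c := by
    field_simp
    linear_combination hsqrt2
  have hden : 1 + 2 * v - v ^ 2 = (c + v) * (1 - c * v) / c := by
    field_simp
    linear_combination v * hsqrt2
  rw [rollerIntegrand, htwo, hquad, hone, hrad, sqrt_div' _ (sq_nonneg _), sqrt_sq hx.le, hnum,
    hden]
  field_simp
  rw [hsqrt2]

theorem rollerIntegrand_sin_sq_mul {φ : ℝ} (hφ : 0 < cos φ) :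
    rollerIntegrand ((√2 - 1 - sin φ ^ 2) / (√2 - 1 + sin φ ^ 2)) *
        (2 * √(√2 - 1) * cos φ / (√2 - 1 + sin φ ^ 2)) =
      2 * √2 *
        (2 * (1 + sin φ ^ 4) ^ 2 / ((1 + 2 * sin φ ^ 2 - sin φ ^ 4) ^ 2 * √(1 + sin φ ^ 2)) +
          √2 * ((1 + sin φ ^ 4) / ((1 + 2 * sin φ ^ 2 - sin φ ^ 4) * √(1 + sin φ ^ 2)))) := by
  have hc := sqrt_two_sub_one_pos
  have hD := one_add_two_mul_sin_sq_sub_sin_pow_four_pos φ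
  have hsqrt2 : √2 ^ 2 = 2 := sq_sqrt zero_le_two
  have hΔ : √(2 * (√2 - 1) * (1 - (sin φ ^ 2) ^ 2)) =
      √2 * √(√2 - 1) * cos φ * √(1 + sin φ ^ 2) := by
    rw [show 2 * (√2 - 1) * (1 - (sin φ ^ 2) ^ 2) =
        2 * (√2 - 1) * cos φ ^ 2 * (1 + sin φ ^ 2) by rw [cos_sq']; ring,
      sqrt_mul (by positivity), sqrt_mul (by positivity), sqrt_mul zero_le_two, sqrt_sq hφ.le]
  rw [rollerIntegrand_div (sq_nonneg _) (sin_sq_le_one φ), hΔ, ← pow_mul]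
  field_simp
  linear_combination -(1 + 2 * sin φ ^ 2 - sin φ ^ 4) * (1 + sin φ ^ 4) * hsqrt2

theorem integral_rollerIntegrand_cos :
    ∫ θ in (0 : ℝ)..(π / 2), rollerIntegrand (cos θ) =
      2 * √2 * ((∫ φ in (0 : ℝ)..arcsin (√(√2 - 1)),
          2 * (1 + sin φ ^ 4) ^ 2 / ((1 + 2 * sin φ ^ 2 - sin φ ^ 4) ^ 2 * √(1 + sin φ ^ 2))) +
        √2 * ∫ φ in (0 : ℝ)..arcsin (√(√2 - 1)),
          (1 + sin φ ^ 4) / ((1 + 2 * sin φ ^ 2 - sin φ ^ 4) * √(1 + sin φ ^ 2))) := by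
  have hω : 0 ≤ arcsin (√(√2 - 1)) := arcsin_nonneg.2 (sqrt_nonneg _)
  rw [integral_comp_cos_eq_integral_arcsin_sqrt _ sqrt_two_sub_one_pos sqrt_two_sub_one_lt_one.le,
    ← intervalIntegral.integral_const_mul (√2), ← intervalIntegral.integral_add
      (continuous_one_add_sin_pow_four_sq_div.intervalIntegrable _ _)
      ((continuous_one_add_sin_pow_four_div.const_mul _).intervalIntegrable _ _),
    ← intervalIntegral.integral_const_mul]
  exact intervalIntegral.integral_congr_Ioo_of_le hω fun φ hφ ↦
    rollerIntegrand_sin_sq_mul (cos_pos_of_mem_Ioo_zero_arcsin hφ)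

/-- the two-circle-roller constant γ has the stated elliptic closed form,
with ω = arcsin(√(√2 − 1)). -/
theorem two_circle_roller_gamma :
    (1 / (2 * Real.sqrt 2)) * (∫ θ in (0 : ℝ)..(Real.pi / 2),
        ((2 + Real.sqrt 2 * Real.cos θ) ^ 2
            * (1 + Real.sqrt 2 * Real.cos θ + Real.cos θ ^ 2))
          / ((1 + Real.sqrt 2 * Real.cos θ) ^ 2
            * Real.sqrt (1 + 2 * Real.sqrt 2 * Real.cos θ + Real.cos θ ^ 2))) =
      (Real.sqrt 2 - 1) / 2
        + ellipticE (Real.arcsin (Real.sqrt (Real.sqrt 2 - 1))) (-1)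
        + Real.sqrt 2 * (ellipticPi (-Real.sqrt 2 - 1) (Real.arcsin (Real.sqrt (Real.sqrt 2 - 1))) (-1)
            + ellipticPi (Real.sqrt 2 - 1) (Real.arcsin (Real.sqrt (Real.sqrt 2 - 1))) (-1)
            - ellipticF (Real.arcsin (Real.sqrt (Real.sqrt 2 - 1))) (-1)) := by
  change 1 / (2 * √2) * (∫ θ in (0 : ℝ)..(π / 2), rollerIntegrand (cos θ)) = _
  rw [integral_rollerIntegrand_cos, integral_one_add_sin_pow_four_sq_div,
    integral_one_add_sin_pow_four_div, algebraicPart_arcsin_sqrt_two_sub_one]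
  field_simp
end
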